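/- arXiv:2602.10700 — 4 statements merged into one kernel-verified Lean document; each statement's English description precedes it below -/
import Mathlib

section
/- Let γ > 1 and ρ̄ > 0, and set C₁(γ) := 1/γ − (1/4)^{γ−1} and C₂(γ) := (1/γ)(4/3)^γ. Then C₁(γ) > 0, and for every real number ρ with ρ ≥ 4ρ̄ one has C₁(γ)(ρ − ρ̄)^γ ≤ Π(ρ) ≤ C₂(γ)(ρ − ρ̄)^γ. -/
/-- The potential energy density `Π(ρ) = (1/γ)ρ^γ − (1/γ)ρ̄^γ − ρ̄^{γ−1}(ρ − ρ̄)`. -/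
noncomputable def potEnergy (γ ρb ρ : ℝ) : ℝ :=
  (1 / γ) * ρ ^ γ - (1 / γ) * ρb ^ γ - ρb ^ (γ - 1) * (ρ - ρb)

/-!
Collecting the powers of `ρ̄` gives `Π(ρ) = ρ^γ / γ - ρ ρ̄^{γ-1} + (1 - 1/γ) ρ̄^γ`. If `k ρ̄ ≤ ρ`,
the middle term is at most `(1/k)^{γ-1} ρ^γ`, so `Π(ρ)` lies between
`(1/γ - (1/k)^{γ-1}) ρ^γ` and `ρ^γ / γ`, while `ρ - ρ̄ ≤ ρ ≤ k/(k-1) (ρ - ρ̄)`. The lower constant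
is positive as soon as `k ≥ e`, because `γ < e^{γ-1}`; in particular `k = 4` is allowed.
-/

section RealPowers

variable {γ k x y : ℝ}

theorem lt_rpow_sub_one_of_exp_one_le (hγ : 1 < γ) (hk : Real.exp 1 ≤ k) : γ < k ^ (γ - 1) :=
  calc
    γ = γ - 1 + 1 := by ring
    _ < Real.exp (γ - 1) := Real.add_one_lt_exp (sub_ne_zero.mpr hγ.ne')
    _ = Real.exp 1 ^ (γ - 1) := (Real.exp_one_rpow _).symm
    _ ≤ k ^ (γ - 1) := Real.rpow_le_rpow (Real.exp_pos 1).le hk (sub_nonneg.mpr hγ.le)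

theorem one_div_rpow_sub_one_lt_one_div (hγ : 1 < γ) (hk : Real.exp 1 ≤ k) :
    (1 / k) ^ (γ - 1) < 1 / γ := by
  have hk₀ : 0 ≤ k := (Real.exp_pos 1).le.trans hk
  rw [Real.div_rpow zero_le_one hk₀, Real.one_rpow]
  exact one_div_lt_one_div_of_lt (zero_lt_one.trans hγ) (lt_rpow_sub_one_of_exp_one_le hγ hk)

theorem mul_rpow_sub_one_eq_rpow (hx : 0 ≤ x) (hγ : γ ≠ 0) : x * x ^ (γ - 1) = x ^ γ := by
  rw [← Real.rpow_one_add' hx (by simpa using hγ), add_sub_cancel]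

theorem mul_rpow_sub_one_le_of_mul_le (hγ : 1 ≤ γ) (hk : 0 < k) (hy : 0 ≤ y) (hxy : k * y ≤ x) :
    x * y ^ (γ - 1) ≤ (1 / k) ^ (γ - 1) * x ^ γ := by
  have hx : 0 ≤ x := (mul_nonneg hk.le hy).trans hxy
  have hyx : y ≤ 1 / k * x := by
    rw [one_div_mul_eq_div]
    exact (le_div_iff₀' hk).mpr hxy
  calc
    x * y ^ (γ - 1) ≤ x * (1 / k * x) ^ (γ - 1) := by gcongr
    _ = (1 / k) ^ (γ - 1) * (x * x ^ (γ - 1)) := by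
      rw [Real.mul_rpow (one_div_pos.mpr hk).le hx]
      ring
    _ = (1 / k) ^ (γ - 1) * x ^ γ := by
      rw [mul_rpow_sub_one_eq_rpow hx (zero_lt_one.trans_le hγ).ne']

theorem rpow_le_mul_rpow_sub_of_mul_le (hγ : 0 ≤ γ) (hk : 1 < k) (hy : 0 ≤ y) (hxy : k * y ≤ x) :
    x ^ γ ≤ (k / (k - 1)) ^ γ * (x - y) ^ γ := by
  have hk₁ : 0 < k - 1 := sub_pos.mpr hk
  have hyx : y ≤ x := (le_mul_of_one_le_left hy hk.le).trans hxy
  have hle : x ≤ k / (k - 1) * (x - y) := by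
    rw [div_mul_eq_mul_div, le_div_iff₀ hk₁]
    linarith
  rw [← Real.mul_rpow (by positivity) (sub_nonneg.mpr hyx)]
  exact Real.rpow_le_rpow (hy.trans hyx) hle hγ

end RealPowers

section PotentialEnergy

variable {γ k ρb ρ : ℝ}

theorem potEnergy_eq (hγ : γ ≠ 0) (hρb : 0 ≤ ρb) :
    potEnergy γ ρb ρ = 1 / γ * ρ ^ γ - ρ * ρb ^ (γ - 1) + (1 - 1 / γ) * ρb ^ γ := by
  rw [potEnergy]
  linear_combination mul_rpow_sub_one_eq_rpow hρb hγ

theorem potEnergy_le_one_div_mul_rpow (hγ : 0 < γ) (hρb : 0 ≤ ρb) (hρ : ρb ≤ ρ) :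
    potEnergy γ ρb ρ ≤ 1 / γ * ρ ^ γ := by
  have hconst : 0 ≤ 1 / γ * ρb ^ γ := by positivity
  have hlinear : 0 ≤ ρb ^ (γ - 1) * (ρ - ρb) :=
    mul_nonneg (Real.rpow_nonneg hρb _) (sub_nonneg.mpr hρ)
  rw [potEnergy]
  linarith

theorem mul_rpow_le_potEnergy (hγ : 1 ≤ γ) (hk : 0 < k) (hρb : 0 ≤ ρb) (hρ : k * ρb ≤ ρ) :
    (1 / γ - (1 / k) ^ (γ - 1)) * ρ ^ γ ≤ potEnergy γ ρb ρ := by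
  have hγ₀ : 0 < γ := zero_lt_one.trans_le hγ
  have hlinear := mul_rpow_sub_one_le_of_mul_le hγ hk hρb hρ
  have hconst : 0 ≤ (1 - 1 / γ) * ρb ^ γ :=
    mul_nonneg (sub_nonneg.mpr ((div_le_one hγ₀).mpr hγ)) (Real.rpow_nonneg hρb _)
  rw [potEnergy_eq hγ₀.ne' hρb]
  linarith

theorem mul_sub_rpow_le_potEnergy (hγ : 1 ≤ γ) (hk : 1 ≤ k) (hρb : 0 ≤ ρb) (hρ : k * ρb ≤ ρ)
    (hcoeff : (1 / k) ^ (γ - 1) ≤ 1 / γ) :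
    (1 / γ - (1 / k) ^ (γ - 1)) * (ρ - ρb) ^ γ ≤ potEnergy γ ρb ρ := by
  have hρbρ : ρb ≤ ρ := (le_mul_of_one_le_left hρb hk).trans hρ
  have hsub : (ρ - ρb) ^ γ ≤ ρ ^ γ :=
    Real.rpow_le_rpow (sub_nonneg.mpr hρbρ) (sub_le_self ρ hρb) (zero_le_one.trans hγ)
  exact (mul_le_mul_of_nonneg_left hsub (sub_nonneg.mpr hcoeff)).trans
    (mul_rpow_le_potEnergy hγ (zero_lt_one.trans_le hk) hρb hρ)

theorem potEnergy_le_mul_sub_rpow (hγ : 0 < γ) (hk : 1 < k) (hρb : 0 ≤ ρb) (hρ : k * ρb ≤ ρ) :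
    potEnergy γ ρb ρ ≤ 1 / γ * (k / (k - 1)) ^ γ * (ρ - ρb) ^ γ :=
  calc
    potEnergy γ ρb ρ ≤ 1 / γ * ρ ^ γ :=
      potEnergy_le_one_div_mul_rpow hγ hρb ((le_mul_of_one_le_left hρb hk.le).trans hρ)
    _ ≤ 1 / γ * ((k / (k - 1)) ^ γ * (ρ - ρb) ^ γ) :=
      mul_le_mul_of_nonneg_left (rpow_le_mul_rpow_sub_of_mul_le hγ.le hk hρb hρ)
        (one_div_pos.mpr hγ).le
    _ = 1 / γ * (k / (k - 1)) ^ γ * (ρ - ρb) ^ γ := (mul_assoc _ _ _).symm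

end PotentialEnergy

theorem stmt1_general {γ ρb k : ℝ} (hγ : 1 < γ) (hρb : 0 ≤ ρb) (hk : Real.exp 1 ≤ k) :
    0 < 1 / γ - (1 / k) ^ (γ - 1) ∧
    ∀ ρ : ℝ, k * ρb ≤ ρ →
      (1 / γ - (1 / k) ^ (γ - 1)) * (ρ - ρb) ^ γ ≤ potEnergy γ ρb ρ ∧
      potEnergy γ ρb ρ ≤ 1 / γ * (k / (k - 1)) ^ γ * (ρ - ρb) ^ γ := by
  have hk₁ : 1 < k := (Real.one_lt_exp_iff.mpr zero_lt_one).trans_le hk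
  have hcoeff : (1 / k) ^ (γ - 1) < 1 / γ := one_div_rpow_sub_one_lt_one_div hγ hk
  exact ⟨sub_pos.mpr hcoeff, fun ρ hρ ↦
    ⟨mul_sub_rpow_le_potEnergy hγ.le hk₁.le hρb hρ hcoeff.le,
      potEnergy_le_mul_sub_rpow (zero_lt_one.trans hγ) hk₁ hρb hρ⟩⟩

theorem stmt1 (γ ρb : ℝ) (hγ : 1 < γ) (hρb : 0 < ρb) :
    0 < 1 / γ - (1 / 4 : ℝ) ^ (γ - 1) ∧
    ∀ ρ : ℝ, 4 * ρb ≤ ρ →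
      (1 / γ - (1 / 4 : ℝ) ^ (γ - 1)) * (ρ - ρb) ^ γ ≤ potEnergy γ ρb ρ ∧
      potEnergy γ ρb ρ ≤ (1 / γ) * (4 / 3 : ℝ) ^ γ * (ρ - ρb) ^ γ := by
  rw [show (4 / 3 : ℝ) = 4 / (4 - 1) by norm_num]
  exact stmt1_general hγ hρb.le (by linarith [Real.exp_one_lt_three])
end

section
/- Let γ > 1 and ρ̄ > 0. There exists a constant C > 0, depending only on γ and ρ̄, such that the following holds: for every E₀ > 0 and every function ρ : ℝ³ → [0,∞) such that the map g : x ↦ √(ρ(x)) is continuously differentiable, with ∫_{ℝ³} Π(ρ(x)) dx ≤ E₀ and ∫_{ℝ³} |∇g(x)|² dx ≤ E₀, one has (∫_{ℝ³} (ρ(x) − ρ̄)² dx)^{1/2} ≤ C(1 + E₀). -/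
open MeasureTheory

/-!
Put `u = √ρ - √ρ̄`, so that `ρ - ρ̄ = u² + 2√ρ̄ u` and `‖ρ - ρ̄‖₂ ≤ ‖u‖₄² + 2√ρ̄ ‖u‖₂`. In the
variable `√ρ` the potential energy grows at least quadratically away from `√ρ̄`, hence `‖u‖₂²` is
at most a constant times the energy; and `H¹` embeds in `L⁴` in dimensions three and four, so
`‖u‖₄²` is bounded by a constant times `E₀` as well.
-/

open Filter Module Topology
open scoped ENNReal NNReal

section PotentialEnergy

lemma rpow_add_mul_rpow_mul_sub_le_rpow {p a t : ℝ} (hp : 1 ≤ p) (ha : 0 < a) (ht : 0 ≤ t) :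
    a ^ p + p * a ^ (p - 1) * (t - a) ≤ t ^ p := by
  have bernoulli := one_add_mul_self_le_rpow_one_add (s := t / a - 1)
    (by linarith [div_nonneg ht ha.le]) hp
  rw [add_sub_cancel, Real.div_rpow ht ha.le, le_div_iff₀ (by positivity)] at bernoulli
  calc a ^ p + p * a ^ (p - 1) * (t - a) = (1 + p * (t / a - 1)) * a ^ p := by
        rw [Real.rpow_sub_one ha.ne']; field_simp
    _ ≤ t ^ p := bernoulli

-- Substituting `t = √r`, `a = √ρb` and dividing by `t`, this is the tangent line inequality for
-- `t ↦ t ^ (2γ - 1)` at `a`.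
lemma mul_sq_sqrt_sub_sqrt_le_mul_potEnergy {γ ρb r : ℝ} (hγ : 1 ≤ γ) (hρb : 0 < ρb)
    (hr : 0 ≤ r) :
    (γ - 1) * ρb ^ (γ - 1) * (√r - √ρb) ^ 2 ≤ γ * potEnergy γ ρb r := by
  obtain ⟨a, ha, rfl⟩ : ∃ a, 0 < a ∧ a ^ 2 = ρb := ⟨√ρb, Real.sqrt_pos.2 hρb, Real.sq_sqrt hρb.le⟩
  obtain ⟨t, ht, rfl⟩ : ∃ t, 0 ≤ t ∧ t ^ 2 = r := ⟨√r, Real.sqrt_nonneg r, Real.sq_sqrt hr⟩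
  have rpow_sq_γ : ∀ {s : ℝ}, 0 ≤ s → (s ^ 2) ^ γ = s ^ (2 * γ - 1) * s := fun {s} hs => by
    rw [← Real.rpow_natCast_mul hs, ← Real.rpow_add_one' hs (by linarith)]
    norm_num
  have rpow_sq_γ_sub_one : (a ^ 2) ^ (γ - 1) = a ^ (2 * γ - 1 - 1) := by
    rw [← Real.rpow_natCast_mul ha.le]
    congr 1
    push_cast
    ring
  have rpow_a : a ^ (2 * γ - 1) = a ^ (2 * γ - 1 - 1) * a := by
    rw [← Real.rpow_add_one ha.ne', sub_add_cancel]
  have tangent := mul_le_mul_of_nonneg_right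
    (rpow_add_mul_rpow_mul_sub_le_rpow (p := 2 * γ - 1) (by linarith) ha ht) ht
  rw [Real.sqrt_sq ha.le, Real.sqrt_sq ht, potEnergy, rpow_sq_γ ht, rpow_sq_γ ha.le,
    rpow_sq_γ_sub_one, mul_sub, mul_sub, one_div, mul_inv_cancel_left₀ (by linarith),
    mul_inv_cancel_left₀ (by linarith), rpow_a]
  rw [rpow_a] at tangent
  linarith

lemma sq_sqrt_sub_sqrt_le_mul_potEnergy {γ ρb r : ℝ} (hγ : 1 < γ) (hρb : 0 < ρb) (hr : 0 ≤ r) :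
    (√r - √ρb) ^ 2 ≤ γ / ((γ - 1) * ρb ^ (γ - 1)) * potEnergy γ ρb r := by
  have : 0 < (γ - 1) * ρb ^ (γ - 1) := mul_pos (sub_pos.2 hγ) (by positivity)
  rw [div_mul_eq_mul_div, le_div_iff₀' this]
  exact mul_sq_sqrt_sub_sqrt_le_mul_potEnergy hγ.le hρb hr

end PotentialEnergy

section LpNorms

variable {α F : Type*} [MeasurableSpace α] {μ : Measure α} [NormedAddCommGroup F]

lemma eLpNorm_two_eq_lintegral_ofReal_sq_norm (f : α → F) (μ : Measure α) :
    eLpNorm f 2 μ = (∫⁻ x, ENNReal.ofReal (‖f x‖ ^ 2) ∂μ) ^ ((1 : ℝ) / 2) := by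
  rw [eLpNorm_eq_lintegral_rpow_enorm_toReal two_ne_zero ENNReal.ofNat_ne_top]
  simp [ENNReal.ofReal_pow]

lemma eLpNorm_two_le_of_sq_norm_le {f : α → F} {g : α → ℝ} {A c : ℝ} (hA : 0 ≤ A)
    (hc : 0 ≤ c) (hfg : ∀ x, ‖f x‖ ^ 2 ≤ c * g x)
    (hg : ∫⁻ x, ENNReal.ofReal (g x) ∂μ ≤ ENNReal.ofReal A) :
    eLpNorm f 2 μ ≤ ENNReal.ofReal (√c * √A) := by
  have lintegral_le : ∫⁻ x, ENNReal.ofReal (‖f x‖ ^ 2) ∂μ ≤ ENNReal.ofReal c * ENNReal.ofReal A :=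
    calc ∫⁻ x, ENNReal.ofReal (‖f x‖ ^ 2) ∂μ
        ≤ ∫⁻ x, ENNReal.ofReal c * ENNReal.ofReal (g x) ∂μ := by
          simp_rw [← ENNReal.ofReal_mul hc]
          exact lintegral_mono fun x => ENNReal.ofReal_le_ofReal (hfg x)
      _ = ENNReal.ofReal c * ∫⁻ x, ENNReal.ofReal (g x) ∂μ :=
          lintegral_const_mul' _ _ ENNReal.ofReal_ne_top
      _ ≤ ENNReal.ofReal c * ENNReal.ofReal A := by gcongr
  rw [eLpNorm_two_eq_lintegral_ofReal_sq_norm, ← Real.sqrt_mul hc, Real.sqrt_eq_rpow,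
    ← ENNReal.ofReal_rpow_of_nonneg (by positivity) (by norm_num), ENNReal.ofReal_mul hc]
  gcongr

lemma eLpNorm_le_max_eLpNorm {f : α → F} (hf : AEStronglyMeasurable f μ) {p q r : ℝ≥0}
    (hp : 0 < p) (hpr : p ≤ r) (hrq : r ≤ q) :
    eLpNorm f r μ ≤ max (eLpNorm f p μ) (eLpNorm f q μ) := by
  obtain ⟨s, t, hs, ht, hst, hr⟩ : (r : ℝ) ∈ segment ℝ (p : ℝ) q := by
    rw [segment_eq_Icc (by exact_mod_cast hpr.trans hrq)]
    exact_mod_cast (⟨hpr, hrq⟩ : r ∈ Set.Icc p q)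
  simp only [smul_eq_mul] at hr
  have hr0 : 0 < r := hp.trans_le hpr
  have hq0 : 0 < q := hr0.trans_le hrq
  set M := max (eLpNorm f p μ) (eLpNorm f q μ)
  have holder := ENNReal.lintegral_mul_norm_pow_le (hf.enorm.pow_const (p : ℝ))
    (hf.enorm.pow_const (q : ℝ)) hs ht hst
  rw [← ENNReal.rpow_le_rpow_iff (z := (r : ℝ)) (by exact_mod_cast hr0),
    eLpNorm_nnreal_pow_eq_lintegral hr0.ne']
  calc ∫⁻ x, ‖f x‖ₑ ^ (r : ℝ) ∂μ
      = ∫⁻ x, (‖f x‖ₑ ^ (p : ℝ)) ^ s * (‖f x‖ₑ ^ (q : ℝ)) ^ t ∂μ := by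
        refine lintegral_congr fun x => ?_
        rw [← ENNReal.rpow_mul, ← ENNReal.rpow_mul,
          ← ENNReal.rpow_add_of_nonneg _ _ (by positivity) (by positivity), ← hr]
        ring_nf
    _ ≤ (eLpNorm f p μ ^ (p : ℝ)) ^ s * (eLpNorm f q μ ^ (q : ℝ)) ^ t := by
        rwa [eLpNorm_nnreal_pow_eq_lintegral hp.ne', eLpNorm_nnreal_pow_eq_lintegral hq0.ne']
    _ ≤ (M ^ (p : ℝ)) ^ s * (M ^ (q : ℝ)) ^ t := by
        gcongr
        exacts [le_max_left _ _, le_max_right _ _]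
    _ = M ^ (r : ℝ) := by
        rw [← ENNReal.rpow_mul, ← ENNReal.rpow_mul,
          ← ENNReal.rpow_add_of_nonneg _ _ (by positivity) (by positivity), ← hr]
        ring_nf

lemma eLpNorm_sq_sub_sq_le {𝕜 : Type*} [NormedField 𝕜] {f : α → 𝕜}
    (hf : AEStronglyMeasurable f μ) (a : 𝕜) {p : ℝ≥0∞} (hp : 1 ≤ p) :
    eLpNorm (fun x => f x ^ 2 - a ^ 2) p μ ≤
      eLpNorm (fun x => f x - a) (p * 2) μ ^ 2 + ‖2 * a‖ₑ * eLpNorm (fun x => f x - a) p μ := by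
  have hfa : AEStronglyMeasurable (fun x => f x - a) μ := hf.sub aestronglyMeasurable_const
  have eLpNorm_sq : eLpNorm (fun x => (f x - a) ^ 2) p μ =
      eLpNorm (fun x => f x - a) (p * 2) μ ^ 2 := by
    rw [← eLpNorm_norm]
    simpa using eLpNorm_norm_rpow (p := p) (μ := μ) (fun x => f x - a) (zero_lt_two (α := ℝ))
  calc eLpNorm (fun x => f x ^ 2 - a ^ 2) p μ
      = eLpNorm ((fun x => (f x - a) ^ 2) + (2 * a) • fun x => f x - a) p μ := by
        congr 1
        ext x
        simp only [Pi.add_apply, Pi.smul_apply, smul_eq_mul]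
        ring
    _ ≤ eLpNorm (fun x => (f x - a) ^ 2) p μ + eLpNorm ((2 * a) • fun x => f x - a) p μ :=
        eLpNorm_add_le (hfa.pow 2) (hfa.const_smul _) hp
    _ = _ := by rw [eLpNorm_sq, eLpNorm_const_smul]

lemma eLpNorm_sqrt_sub_sqrt_le {ρ : α → ℝ} {γ ρb E₀ : ℝ} (hγ : 1 < γ) (hρb : 0 < ρb)
    (hE₀ : 0 ≤ E₀) (hρ : ∀ x, 0 ≤ ρ x)
    (henergy : ∫⁻ x, ENNReal.ofReal (potEnergy γ ρb (ρ x)) ∂μ ≤ ENNReal.ofReal E₀) :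
    eLpNorm (fun x => √(ρ x) - √ρb) 2 μ ≤
      ENNReal.ofReal (√(γ / ((γ - 1) * ρb ^ (γ - 1))) * √E₀) := by
  have : 0 ≤ γ - 1 := by linarith
  refine eLpNorm_two_le_of_sq_norm_le hE₀ (by positivity) (fun x => ?_) henergy
  rw [Real.norm_eq_abs, sq_abs]
  exact sq_sqrt_sub_sqrt_le_mul_potEnergy hγ hρb (hρ x)

lemma eLpNorm_sub_const_le_of_eLpNorm_sqrt_sub_le {ρ : α → ℝ} {ρb A B : ℝ}
    (hρm : AEStronglyMeasurable (fun x => √(ρ x)) μ) (hρ : ∀ x, 0 ≤ ρ x) (hρb : 0 ≤ ρb)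
    (hA : 0 ≤ A) (hB : 0 ≤ B) {p : ℝ≥0∞} (hp : 1 ≤ p)
    (h2p : eLpNorm (fun x => √(ρ x) - √ρb) (p * 2) μ ≤ ENNReal.ofReal A)
    (h1p : eLpNorm (fun x => √(ρ x) - √ρb) p μ ≤ ENNReal.ofReal B) :
    eLpNorm (fun x => ρ x - ρb) p μ ≤ ENNReal.ofReal (A ^ 2 + 2 * √ρb * B) := by
  calc eLpNorm (fun x => ρ x - ρb) p μ = eLpNorm (fun x => √(ρ x) ^ 2 - √ρb ^ 2) p μ := by
        simp only [Real.sq_sqrt (hρ _), Real.sq_sqrt hρb]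
    _ ≤ eLpNorm (fun x => √(ρ x) - √ρb) (p * 2) μ ^ 2 +
          ‖2 * √ρb‖ₑ * eLpNorm (fun x => √(ρ x) - √ρb) p μ := eLpNorm_sq_sub_sq_le hρm _ hp
    _ ≤ ENNReal.ofReal A ^ 2 + ENNReal.ofReal (2 * √ρb) * ENNReal.ofReal B := by
        rw [Real.enorm_of_nonneg (by positivity)]
        gcongr
    _ = ENNReal.ofReal (A ^ 2 + 2 * √ρb * B) := by
        rw [← ENNReal.ofReal_pow hA, ← ENNReal.ofReal_mul (by positivity),
          ← ENNReal.ofReal_add (by positivity) (by positivity)]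

end LpNorms

section Sobolev

variable {E : Type*} [NormedAddCommGroup E] [NormedSpace ℝ E]

/-- The smooth cutoff at scale `R ≠ 0`: a fixed bump function on `E`, equal to `1` on the unit ball,
rescaled by the factor `R`. It is used to approximate functions by compactly supported ones. -/
noncomputable def cutoff [HasContDiffBump E] (R : ℝ) (x : E) : ℝ :=
  (⟨1, 2, one_pos, one_lt_two⟩ : ContDiffBump (0 : E)) (R⁻¹ • x)

lemma contDiff_cutoff [HasContDiffBump E] (R : ℝ) {n : ℕ∞} : ContDiff ℝ n (cutoff (E := E) R) :=
  (ContDiffBump.contDiff _).comp (contDiff_const_smul _)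

lemma hasCompactSupport_cutoff [FiniteDimensional ℝ E] {R : ℝ} (hR : R ≠ 0) :
    HasCompactSupport (cutoff (E := E) R) :=
  (ContDiffBump.hasCompactSupport _).comp_smul (inv_ne_zero hR)

lemma norm_cutoff_le_one [HasContDiffBump E] (R : ℝ) (x : E) : ‖cutoff R x‖ ≤ 1 := by
  rw [cutoff, Real.norm_of_nonneg (ContDiffBump.nonneg _)]
  exact ContDiffBump.le_one _

lemma cutoff_eq_one [HasContDiffBump E] {R : ℝ} {x : E} (hx : ‖x‖ ≤ R) : cutoff R x = 1 := by
  apply ContDiffBump.one_of_mem_closedBall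
  rw [mem_closedBall_zero_iff, norm_smul, norm_inv,
    Real.norm_of_nonneg ((norm_nonneg x).trans hx)]
  exact inv_mul_le_one_of_le₀ hx ((norm_nonneg x).trans hx)

lemma exists_norm_fderiv_cutoff_le [FiniteDimensional ℝ E] :
    ∃ K : ℝ≥0, ∀ (R : ℝ) (x : E), ‖fderiv ℝ (cutoff R) x‖ ≤ K * ‖R⁻¹‖ := by
  let φ : ContDiffBump (0 : E) := ⟨1, 2, one_pos, one_lt_two⟩
  have hφ : ContDiff ℝ 1 φ := φ.contDiff
  obtain ⟨K, hK⟩ := (φ.hasCompactSupport.fderiv (𝕜 := ℝ)).exists_bound_of_continuous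
    (hφ.continuous_fderiv one_ne_zero)
  refine ⟨⟨K, (norm_nonneg _).trans (hK 0)⟩, fun R x => ?_⟩
  calc ‖fderiv ℝ (cutoff R) x‖ = ‖R⁻¹ • fderiv ℝ φ (R⁻¹ • x)‖ := by
        rw [← fderiv_comp_smul]; rfl
    _ ≤ K * ‖R⁻¹‖ := by
        rw [norm_smul, mul_comm]
        gcongr
        exact hK _

variable [MeasurableSpace E] [BorelSpace E] {F : Type*} [NormedAddCommGroup F] [NormedSpace ℝ F]

lemma eLpNorm_fderiv_smul_le [FiniteDimensional ℝ E] {μ : Measure E} {χ : E → ℝ} {u : E → F}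
    (hχ : ContDiff ℝ 1 χ) (hu : ContDiff ℝ 1 u) {a b : ℝ} (ha : ∀ x, ‖χ x‖ ≤ a)
    (hb : ∀ x, ‖fderiv ℝ χ x‖ ≤ b) {p : ℝ≥0∞} (hp : 1 ≤ p) :
    eLpNorm (fderiv ℝ fun x => χ x • u x) p μ ≤
      ENNReal.ofReal a * eLpNorm (fderiv ℝ u) p μ + ENNReal.ofReal b * eLpNorm u p μ := by
  let Dχu (x : E) : E →L[ℝ] F := (fderiv ℝ χ x).smulRight (u x)
  have leibniz : (fderiv ℝ fun x => χ x • u x) = χ • fderiv ℝ u + Dχu :=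
    funext fun x => fderiv_fun_smul (hχ.differentiable one_ne_zero x)
      (hu.differentiable one_ne_zero x)
  have continuous_smul : Continuous (χ • fderiv ℝ u) :=
    hχ.continuous.smul (hu.continuous_fderiv one_ne_zero)
  have continuous_Dχu : Continuous Dχu := isBoundedBilinearMap_smulRight.continuous.comp
    ((hχ.continuous_fderiv one_ne_zero).prodMk hu.continuous)
  have norm_smul_le (x : E) : ‖(χ • fderiv ℝ u) x‖ ≤ a * ‖fderiv ℝ u x‖ := by
    rw [Pi.smul_apply', norm_smul]
    gcongr
    exact ha x
  have norm_Dχu_le (x : E) : ‖Dχu x‖ ≤ b * ‖u x‖ := by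
    rw [ContinuousLinearMap.norm_smulRight_apply]
    gcongr
    exact hb x
  rw [leibniz]
  exact (eLpNorm_add_le continuous_smul.aestronglyMeasurable
    continuous_Dχu.aestronglyMeasurable hp).trans <| add_le_add
      (eLpNorm_le_mul_eLpNorm_of_ae_le_mul (.of_forall norm_smul_le) p)
      (eLpNorm_le_mul_eLpNorm_of_ae_le_mul (.of_forall norm_Dχu_le) p)

variable [FiniteDimensional ℝ E] [FiniteDimensional ℝ F] (μ : Measure E) [μ.IsAddHaarMeasure]

-- The gradient of the cutoff at scale `n` is `O(1/n)`, so integrability of `u` can replace the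
-- compact support required in `eLpNorm_le_eLpNorm_fderiv_of_eq`, with the same constant.
lemma eLpNorm_le_eLpNorm_fderiv_of_memLp {u : E → F} (hu : ContDiff ℝ 1 u) {p q : ℝ≥0}
    (hup : MemLp u p μ) (hp : 1 ≤ p) (hE : 0 < finrank ℝ E)
    (hq : (q : ℝ)⁻¹ = (p : ℝ)⁻¹ - (finrank ℝ E : ℝ)⁻¹) :
    eLpNorm u q μ ≤ SNormLESNormFDerivOfEqConst F μ p * eLpNorm (fderiv ℝ u) p μ := by
  obtain ⟨K, hK⟩ := exists_norm_fderiv_cutoff_le (E := E)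
  set S := SNormLESNormFDerivOfEqConst F μ p
  let v (n : ℕ) (x : E) : F := cutoff (n + 1 : ℝ) x • u x
  let bound (n : ℕ) : ℝ≥0∞ :=
    S * (eLpNorm (fderiv ℝ u) p μ + ENNReal.ofReal (K * ‖(n + 1 : ℝ)⁻¹‖) * eLpNorm u p μ)
  have hv (n : ℕ) : ContDiff ℝ 1 (v n) := (contDiff_cutoff _).smul hu
  have v_le_bound (n : ℕ) : eLpNorm (v n) q μ ≤ bound n := by
    refine (eLpNorm_le_eLpNorm_fderiv_of_eq μ (hv n)
      (hasCompactSupport_cutoff (by positivity)).smul_right hp hE hq).trans ?_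
    refine mul_le_mul_right ?_ _
    simpa using eLpNorm_fderiv_smul_le (contDiff_cutoff _) hu (norm_cutoff_le_one _) (hK _)
      (by exact_mod_cast hp)
  have tendsto_v (x : E) : Tendsto (v · x) atTop (𝓝 (u x)) := by
    refine tendsto_const_nhds.congr' ?_
    filter_upwards [eventually_ge_atTop ⌈‖x‖⌉₊] with n hn
    have hx : ‖x‖ ≤ n + 1 := (Nat.ceil_le.1 hn).trans (le_add_of_nonneg_right zero_le_one)
    simp [v, cutoff_eq_one hx]
  have tendsto_bound : Tendsto bound atTop (𝓝 (S * eLpNorm (fderiv ℝ u) p μ)) := by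
    have scale : Tendsto (fun n : ℕ => ENNReal.ofReal (K * ‖(n + 1 : ℝ)⁻¹‖)) atTop (𝓝 0) := by
      simpa using ENNReal.tendsto_ofReal
        ((tendsto_one_div_add_atTop_nhds_zero_nat (𝕜 := ℝ)).norm.const_mul (K : ℝ))
    simpa only [zero_mul, add_zero] using ENNReal.Tendsto.const_mul (tendsto_const_nhds.add
      (ENNReal.Tendsto.mul_const scale (.inr hup.eLpNorm_ne_top))) (.inr ENNReal.coe_ne_top)
  calc eLpNorm u q μ ≤ liminf (fun n => eLpNorm (v n) q μ) atTop :=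
        Lp.eLpNorm_lim_le_liminf_eLpNorm (fun n => (hv n).continuous.aestronglyMeasurable) u
          (.of_forall tendsto_v)
    _ ≤ liminf bound atTop := liminf_le_liminf (.of_forall v_le_bound)
    _ = S * eLpNorm (fderiv ℝ u) p μ := tendsto_bound.liminf_eq

lemma eLpNorm_le_max_eLpNorm_eLpNorm_fderiv {u : E → F} (hu : ContDiff ℝ 1 u) {p r : ℝ≥0}
    (hup : MemLp u p μ) (hp : 1 ≤ p) (hpE : p < finrank ℝ E) (hpr : p ≤ r)
    (hr : (p : ℝ)⁻¹ - (finrank ℝ E : ℝ)⁻¹ ≤ (r : ℝ)⁻¹) :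
    eLpNorm u r μ ≤
      max (eLpNorm u p μ) (SNormLESNormFDerivOfEqConst F μ p * eLpNorm (fderiv ℝ u) p μ) := by
  have hp0 : 0 < p := one_pos.trans_le hp
  have hE : (finrank ℝ E : ℝ≥0)⁻¹ < p⁻¹ := inv_strictAnti₀ hp0 hpE
  let q : ℝ≥0 := (p⁻¹ - (finrank ℝ E : ℝ≥0)⁻¹)⁻¹
  have hq : (q : ℝ)⁻¹ = (p : ℝ)⁻¹ - (finrank ℝ E : ℝ)⁻¹ := by
    simp [q, NNReal.coe_sub hE.le]
  have hrq : r ≤ q := by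
    refine le_inv_of_le_inv₀ (tsub_pos_of_lt hE) ?_
    rw [← NNReal.coe_le_coe, NNReal.coe_sub hE.le]
    simpa using hr
  refine (eLpNorm_le_max_eLpNorm hup.1 hp0 hpr hrq).trans (max_le_max le_rfl ?_)
  exact eLpNorm_le_eLpNorm_fderiv_of_memLp μ hu hup hp (by exact_mod_cast hp0.trans hpE) hq

lemma eLpNorm_four_le_of_eLpNorm_two_le (hE : 2 < finrank ℝ E) (hE' : finrank ℝ E ≤ 4) {u : E → F}
    (hu : ContDiff ℝ 1 u) {A B : ℝ} (hA : eLpNorm u 2 μ ≤ ENNReal.ofReal A)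
    (hB : eLpNorm (fderiv ℝ u) 2 μ ≤ ENNReal.ofReal B) :
    eLpNorm u 4 μ ≤ ENNReal.ofReal (max A (SNormLESNormFDerivOfEqConst F μ 2 * B)) := by
  have inv_finrank : (4 : ℝ)⁻¹ ≤ (finrank ℝ E : ℝ)⁻¹ :=
    inv_anti₀ (by positivity) (by exact_mod_cast hE')
  have hu2 : MemLp u 2 μ := ⟨hu.continuous.aestronglyMeasurable, hA.trans_lt ENNReal.ofReal_lt_top⟩
  rw [ENNReal.ofReal_max, ENNReal.ofReal_mul NNReal.zero_le_coe, ENNReal.ofReal_coe_nnreal]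
  calc eLpNorm u 4 μ
      ≤ max (eLpNorm u 2 μ) (SNormLESNormFDerivOfEqConst F μ 2 * eLpNorm (fderiv ℝ u) 2 μ) :=
        eLpNorm_le_max_eLpNorm_eLpNorm_fderiv μ hu (p := 2) (r := 4) hu2 one_le_two
          (by exact_mod_cast hE) (by norm_num) (by push_cast; linarith)
    _ ≤ _ := by gcongr

theorem stmt7_general (hE : 2 < finrank ℝ E) (hE' : finrank ℝ E ≤ 4) {γ ρb : ℝ} (hγ : 1 < γ)
    (hρb : 0 < ρb) :
    ∃ C : ℝ, 0 < C ∧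
      ∀ E₀ : ℝ, 0 ≤ E₀ →
        ∀ ρ : E → ℝ, (∀ x, 0 ≤ ρ x) →
          ContDiff ℝ 1 (fun x => √(ρ x)) →
          (∫⁻ x, ENNReal.ofReal (potEnergy γ ρb (ρ x)) ∂μ) ≤ ENNReal.ofReal E₀ →
          (∫⁻ x, ENNReal.ofReal (‖fderiv ℝ (fun y => √(ρ y)) x‖ ^ 2) ∂μ) ≤
            ENNReal.ofReal E₀ →
          (∫⁻ x, ENNReal.ofReal ((ρ x - ρb) ^ 2) ∂μ) ^ ((1 : ℝ) / 2) ≤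
            ENNReal.ofReal (C * (1 + E₀)) := by
  set k : ℝ := √(γ / ((γ - 1) * ρb ^ (γ - 1)))
  set S : ℝ≥0 := SNormLESNormFDerivOfEqConst ℝ μ 2
  have : 0 < γ - 1 := by linarith
  have : 0 < k := Real.sqrt_pos.2 (by positivity)
  refine ⟨max k S ^ 2 + 2 * √ρb * k, by positivity, fun E₀ hE₀ ρ hρ hg henergy hgrad => ?_⟩
  have u_two := eLpNorm_sqrt_sub_sqrt_le hγ hρb hE₀ hρ henergy
  have fderiv_u_two : eLpNorm (fderiv ℝ fun x => √(ρ x) - √ρb) 2 μ ≤ ENNReal.ofReal √E₀ := by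
    simpa using eLpNorm_two_le_of_sq_norm_le hE₀ zero_le_one
      (fun x => by rw [fderiv_sub_const, one_mul]) hgrad
  have u_four := eLpNorm_four_le_of_eLpNorm_two_le μ hE hE' (hg.sub contDiff_const) u_two
    fderiv_u_two
  rw [← max_mul_of_nonneg _ _ (Real.sqrt_nonneg E₀)] at u_four
  have sqrt_E₀_le : √E₀ ≤ 1 + E₀ := Real.sqrt_le_iff.2 ⟨by positivity, by nlinarith⟩
  calc (∫⁻ x, ENNReal.ofReal ((ρ x - ρb) ^ 2) ∂μ) ^ ((1 : ℝ) / 2)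
      = eLpNorm (fun x => ρ x - ρb) 2 μ := by
        simp only [eLpNorm_two_eq_lintegral_ofReal_sq_norm, Real.norm_eq_abs, sq_abs]
    _ ≤ ENNReal.ofReal ((max k S * √E₀) ^ 2 + 2 * √ρb * (k * √E₀)) :=
        eLpNorm_sub_const_le_of_eLpNorm_sqrt_sub_le hg.continuous.aestronglyMeasurable hρ hρb.le
          (by positivity) (by positivity) one_le_two (by convert! u_four; norm_num) u_two
    _ ≤ ENNReal.ofReal ((max k S ^ 2 + 2 * √ρb * k) * (1 + E₀)) := by
        rw [mul_pow, Real.sq_sqrt hE₀, ← mul_assoc, add_mul]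
        gcongr
        linarith

end Sobolev

theorem stmt7 (γ ρb : ℝ) (hγ : 1 < γ) (hρb : 0 < ρb) :
    ∃ C : ℝ, 0 < C ∧
      ∀ E₀ : ℝ, 0 < E₀ →
        ∀ ρ : EuclideanSpace ℝ (Fin 3) → ℝ, (∀ x, 0 ≤ ρ x) →
          ContDiff ℝ 1 (fun x => Real.sqrt (ρ x)) →
          (∫⁻ x, ENNReal.ofReal (potEnergy γ ρb (ρ x))) ≤ ENNReal.ofReal E₀ →
          (∫⁻ x, ENNReal.ofReal (‖fderiv ℝ (fun y => Real.sqrt (ρ y)) x‖ ^ 2)) ≤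
            ENNReal.ofReal E₀ →
          (∫⁻ x, ENNReal.ofReal ((ρ x - ρb) ^ 2)) ^ ((1 : ℝ) / 2) ≤
            ENNReal.ofReal (C * (1 + E₀)) := by
  obtain ⟨C, hC, h⟩ := stmt7_general (E := EuclideanSpace ℝ (Fin 3)) volume
    (by simp) (by simp) hγ hρb
  exact ⟨C, hC, fun E₀ hE₀ => h E₀ hE₀.le⟩
end

section
/- Let ρ : ℝ × ℝ³ → ℝ be continuously differentiable in time and twice continuously differentiable in space with ρ(t,x) > 0 everywhere, and let v : ℝ × ℝ³ → ℝ³ be continuously differentiable in space. Assume that ∂ₜρ + div_x(ρv) − Δ_xρ = 0 holds at every point (t,x). Then the function w := ρ⁻¹ satisfies, at every point (t,x), ∂ₜw − Δ_x w + 2ρ|∇_x w|² + v·∇_x w − w · div_x v = 0. -/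
/-- Partial derivative `∂ᵢ f` of a scalar function on `ℝ³`. -/
noncomputable def pd (f : EuclideanSpace ℝ (Fin 3) → ℝ) (i : Fin 3)
    (x : EuclideanSpace ℝ (Fin 3)) : ℝ :=
  fderiv ℝ f x (EuclideanSpace.single i 1)

/-- Divergence `∑ᵢ ∂ᵢ fᵢ` of a vector field on `ℝ³`. -/
noncomputable def divg (f : EuclideanSpace ℝ (Fin 3) → EuclideanSpace ℝ (Fin 3))
    (x : EuclideanSpace ℝ (Fin 3)) : ℝ :=
  ∑ i, pd (fun y => f y i) i x

/-- Laplacian `∑ᵢ ∂ᵢ² f` of a scalar function on `ℝ³`. -/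
noncomputable def lap (f : EuclideanSpace ℝ (Fin 3) → ℝ)
    (x : EuclideanSpace ℝ (Fin 3)) : ℝ :=
  ∑ i, pd (pd f i) i x

/-!
By the chain rule, `∂ₜφ(ρ) + v·∇φ(ρ) - Δφ(ρ)` is `φ'(ρ)` times `∂ₜρ + div(ρv) - Δρ`, minus the two
corrections `φ'(ρ) ρ div v` and `φ''(ρ) |∇ρ|²`. For `φ(r) = r⁻¹` and `w = ρ⁻¹` these corrections are
`-w div v` and `2ρ⁻³ |∇ρ|² = 2ρ |∇w|²`.
-/

open scoped Gradient InnerProductSpace Laplacian Topology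

theorem deriv_deriv_inv {𝕜 : Type*} [NontriviallyNormedField 𝕜] (x : 𝕜) :
    deriv (deriv Inv.inv) x = 2 * (x ^ 3)⁻¹ :=
  calc deriv (deriv Inv.inv) x
    _ = (-1) ^ 2 * (Nat.factorial 2 : ℕ) * x ^ (-1 - (2 : ℕ) : ℤ) := iter_deriv_inv 2 x
    _ = 2 * (x ^ 3)⁻¹ := by norm_num [zpow_neg, zpow_ofNat]

section VectorCalculus

variable {E : Type*} [NormedAddCommGroup E] [InnerProductSpace ℝ E]

/-- Divergence of a vector field, defined without coordinates as the trace of its derivative; its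
junk value is `0` where the field is not differentiable and in infinite dimension. -/
noncomputable def divergence (F : E → E) (x : E) : ℝ :=
  LinearMap.trace ℝ E (fderiv ℝ F x)

theorem divergence_eq_sum_inner {ι : Type*} [Fintype ι] (b : OrthonormalBasis ι ℝ E)
    (F : E → E) (x : E) :
    divergence F x = ∑ i, ⟪b i, fderiv ℝ F x (b i)⟫_ℝ :=
  LinearMap.trace_eq_sum_inner _ b

theorem divergence_congr {F G : E → E} {x : E} (h : F =ᶠ[𝓝 x] G) :
    divergence F x = divergence G x := by
  rw [divergence, h.fderiv_eq, divergence]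

theorem gradient_comp [CompleteSpace E] {φ : ℝ → ℝ} {f : E → ℝ} {x : E}
    (hφ : DifferentiableAt ℝ φ (f x)) (hf : DifferentiableAt ℝ f x) :
    ∇ (φ ∘ f) x = deriv φ (f x) • ∇ f x := by
  simp [gradient, (hφ.hasDerivAt.comp_hasFDerivAt x hf.hasFDerivAt).fderiv]

theorem gradient_fun_inv [CompleteSpace E] {f : E → ℝ} {x : E} (hf : DifferentiableAt ℝ f x)
    (hx : f x ≠ 0) : ∇ (fun y => (f y)⁻¹) x = -(f x ^ 2)⁻¹ • ∇ f x := by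
  rw [← deriv_inv]
  exact gradient_comp (differentiableAt_inv hx) hf

theorem differentiableAt_gradient [CompleteSpace E] {f : E → ℝ} {x : E}
    (hf : ContDiffAt ℝ 2 f x) : DifferentiableAt ℝ (∇ f) x :=
  (InnerProductSpace.toDual ℝ E).symm.differentiable.differentiableAt.comp x
    ((hf.fderiv_right (m := 1) (by norm_num)).differentiableAt one_ne_zero)

variable [FiniteDimensional ℝ E]

theorem divergence_smul {f : E → ℝ} {F : E → E} {x : E} (hf : DifferentiableAt ℝ f x)
    (hF : DifferentiableAt ℝ F x) :
    divergence (fun y => f y • F y) x = f x * divergence F x + ⟪F x, ∇ f x⟫_ℝ := by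
  simp [divergence, fderiv_fun_smul hf hF]

theorem divergence_gradient (f : E → ℝ) (x : E) : divergence (∇ f) x = Δ f x := by
  have fderiv_gradient : fderiv ℝ (∇ f) x = _ :=
    (InnerProductSpace.toDual ℝ E).symm.comp_fderiv (f := fderiv ℝ f)
  have hessian (y : E) : ⟪y, fderiv ℝ (∇ f) x y⟫_ℝ = fderiv ℝ (fderiv ℝ f) x y y := by
    rw [real_inner_comm, fderiv_gradient]
    exact InnerProductSpace.toDual_symm_apply
  simp [InnerProductSpace.laplacian_eq_iteratedFDeriv_stdOrthonormalBasis,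
    divergence_eq_sum_inner (stdOrthonormalBasis ℝ E), hessian, iteratedFDeriv_two_apply]

theorem laplacian_comp {φ : ℝ → ℝ} {f : E → ℝ} {x : E} (hφ : ContDiffAt ℝ 2 φ (f x))
    (hf : ContDiffAt ℝ 2 f x) :
    Δ (φ ∘ f) x = deriv φ (f x) * Δ f x + deriv (deriv φ) (f x) * ‖∇ f x‖ ^ 2 := by
  have hf' : DifferentiableAt ℝ f x := hf.differentiableAt two_ne_zero
  have hφ' : DifferentiableAt ℝ (deriv φ) (f x) :=
    (hφ.derivWithin (m := 1) (by norm_num)).differentiableAt one_ne_zero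
  have gradient_near : ∇ (φ ∘ f) =ᶠ[𝓝 x] fun y => (deriv φ ∘ f) y • ∇ f y := by
    filter_upwards [hf.eventually (by simp),
      hf.continuousAt.eventually (hφ.eventually (by simp))] with y hfy hφy
    exact gradient_comp (hφy.differentiableAt two_ne_zero) (hfy.differentiableAt two_ne_zero)
  calc Δ (φ ∘ f) x
    _ = divergence (fun y => (deriv φ ∘ f) y • ∇ f y) x := by
      rw [← divergence_gradient, divergence_congr gradient_near]
    _ = deriv φ (f x) * divergence (∇ f) x + ⟪∇ f x, ∇ (deriv φ ∘ f) x⟫_ℝ :=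
      divergence_smul (hφ'.comp x hf') (differentiableAt_gradient hf)
    _ = deriv φ (f x) * Δ f x + deriv (deriv φ) (f x) * ‖∇ f x‖ ^ 2 := by
      rw [divergence_gradient, gradient_comp hφ' hf', inner_smul_right,
        real_inner_self_eq_norm_sq]

end VectorCalculus

section FokkerPlanck

variable {E : Type*} [NormedAddCommGroup E] [InnerProductSpace ℝ E] [FiniteDimensional ℝ E]

/-- The left-hand side `∂ₜρ + div(ρv) - Δρ` of the continuity equation with unit diffusion and
drift `v`. -/
noncomputable def fokkerPlanck (v : ℝ → E → E) (ρ : ℝ → E → ℝ) (t : ℝ) (x : E) : ℝ :=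
  deriv (fun s => ρ s x) t + divergence (fun y => ρ t y • v t y) x - Δ (ρ t) x

theorem renormalized_fokkerPlanck {φ : ℝ → ℝ} {ρ : ℝ → E → ℝ} {v : ℝ → E → E} {t : ℝ} {x : E}
    (hφ : ContDiffAt ℝ 2 φ (ρ t x)) (hρt : DifferentiableAt ℝ (fun s => ρ s x) t)
    (hρx : ContDiffAt ℝ 2 (ρ t) x) (hv : DifferentiableAt ℝ (v t) x) :
    deriv (fun s => φ (ρ s x)) t + ⟪v t x, ∇ (φ ∘ ρ t) x⟫_ℝ - Δ (φ ∘ ρ t) x =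
      deriv φ (ρ t x) * (fokkerPlanck v ρ t x - ρ t x * divergence (v t) x) -
        deriv (deriv φ) (ρ t x) * ‖∇ (ρ t) x‖ ^ 2 := by
  have hφ' : DifferentiableAt ℝ φ (ρ t x) := hφ.differentiableAt two_ne_zero
  have hρx' : DifferentiableAt ℝ (ρ t) x := hρx.differentiableAt two_ne_zero
  have time_deriv :
      deriv (fun s => φ (ρ s x)) t = deriv φ (ρ t x) * deriv (fun s => ρ s x) t :=
    deriv_comp t hφ' hρt
  rw [fokkerPlanck, time_deriv, gradient_comp hφ' hρx', inner_smul_right, laplacian_comp hφ hρx,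
    divergence_smul hρx' hv]
  ring

theorem stmt14_general {ρ : ℝ → E → ℝ} {v : ℝ → E → E} {t : ℝ} {x : E}
    (hρt : DifferentiableAt ℝ (fun s => ρ s x) t) (hρx : ContDiffAt ℝ 2 (ρ t) x)
    (hρ : ρ t x ≠ 0) (hv : DifferentiableAt ℝ (v t) x) :
    deriv (fun s => (ρ s x)⁻¹) t - Δ (fun y => (ρ t y)⁻¹) x +
        2 * ρ t x * ‖∇ (fun y => (ρ t y)⁻¹) x‖ ^ 2 + ⟪v t x, ∇ (fun y => (ρ t y)⁻¹) x⟫_ℝ -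
        (ρ t x)⁻¹ * divergence (v t) x =
      -(ρ t x ^ 2)⁻¹ * fokkerPlanck v ρ t x := by
  have renormalized := renormalized_fokkerPlanck (contDiffAt_inv ℝ hρ) hρt hρx hv
  have gradient_term :
      2 * ρ t x * ‖∇ (fun y => (ρ t y)⁻¹) x‖ ^ 2 = 2 * (ρ t x ^ 3)⁻¹ * ‖∇ (ρ t) x‖ ^ 2 := by
    rw [gradient_fun_inv (hρx.differentiableAt two_ne_zero) hρ, norm_smul, mul_pow,
      Real.norm_eq_abs, sq_abs]
    field_simp
  have divergence_coeff : (ρ t x ^ 2)⁻¹ * ρ t x = (ρ t x)⁻¹ := by field_simp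
  rw [deriv_deriv_inv, deriv_inv] at renormalized
  simp only [Function.comp_def] at renormalized
  linear_combination renormalized + gradient_term + divergence (v t) x * divergence_coeff

end FokkerPlanck

section Coordinates

variable (f : EuclideanSpace ℝ (Fin 3) → ℝ) (x : EuclideanSpace ℝ (Fin 3))

theorem gradient_apply_eq_pd (i : Fin 3) : ∇ f x i = pd f i x := by
  simp [pd, ← inner_gradient_left, EuclideanSpace.inner_single_right]

theorem sum_sq_pd : ∑ i, pd f i x ^ 2 = ‖∇ f x‖ ^ 2 := by
  simp only [EuclideanSpace.real_norm_sq_eq, gradient_apply_eq_pd]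

theorem sum_mul_pd (u : EuclideanSpace ℝ (Fin 3)) : ∑ i, u i * pd f i x = ⟪u, ∇ f x⟫_ℝ := by
  simp only [PiLp.inner_apply, gradient_apply_eq_pd, RCLike.inner_apply, conj_trivial, mul_comm]

variable {f x}

theorem divg_eq_divergence {F : EuclideanSpace ℝ (Fin 3) → EuclideanSpace ℝ (Fin 3)}
    (hF : DifferentiableAt ℝ F x) : divg F x = divergence F x := by
  have fderiv_coord (i : Fin 3) :
      fderiv ℝ (fun y => F y i) x = (EuclideanSpace.proj i).comp (fderiv ℝ F x) :=
    ((EuclideanSpace.proj (𝕜 := ℝ) i).hasFDerivAt.comp x hF.hasFDerivAt).fderiv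
  simp [divergence_eq_sum_inner (EuclideanSpace.basisFun (Fin 3) ℝ), divg, pd, fderiv_coord,
    EuclideanSpace.inner_single_left]

theorem lap_eq_laplacian (hf : ContDiffAt ℝ 2 f x) : lap f x = Δ f x := by
  rw [← divergence_gradient, ← divg_eq_divergence (differentiableAt_gradient hf)]
  simp only [divg, lap, gradient_apply_eq_pd]

end Coordinates

theorem stmt14 (ρ : ℝ → EuclideanSpace ℝ (Fin 3) → ℝ)
    (v : ℝ → EuclideanSpace ℝ (Fin 3) → EuclideanSpace ℝ (Fin 3))
    (hρt : ∀ x, ContDiff ℝ 1 (fun t => ρ t x))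
    (hρx : ∀ t, ContDiff ℝ 2 (ρ t))
    (hpos : ∀ t x, 0 < ρ t x)
    (hv : ∀ t, ContDiff ℝ 1 (v t))
    (hpde : ∀ t x,
      deriv (fun s => ρ s x) t + divg (fun y => ρ t y • v t y) x - lap (ρ t) x = 0) :
    ∀ t x,
      deriv (fun s => (ρ s x)⁻¹) t - lap (fun y => (ρ t y)⁻¹) x +
          2 * ρ t x * (∑ i, (pd (fun y => (ρ t y)⁻¹) i x) ^ 2) +
          (∑ i, v t x i * pd (fun y => (ρ t y)⁻¹) i x) -
          (ρ t x)⁻¹ * divg (v t) x = 0 := by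
  intro t x
  have hρ_space : ContDiffAt ℝ 2 (ρ t) x := (hρx t).contDiffAt
  have hρ_time : DifferentiableAt ℝ (fun s => ρ s x) t := (hρt x).differentiable one_ne_zero t
  have hv_space : DifferentiableAt ℝ (v t) x := (hv t).differentiable one_ne_zero x
  have hρ_ne : ρ t x ≠ 0 := (hpos t x).ne'
  have pde : fokkerPlanck v ρ t x = 0 := by
    rw [fokkerPlanck, ← lap_eq_laplacian hρ_space,
      ← divg_eq_divergence ((hρ_space.differentiableAt two_ne_zero).fun_smul hv_space), hpde]
  rw [lap_eq_laplacian (hρ_space.fun_inv hρ_ne), sum_sq_pd, sum_mul_pd,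
    divg_eq_divergence hv_space, stmt14_general hρ_time hρ_space hρ_ne hv_space, pde, mul_zero]
end

section
/- Let r > 1 and B ≥ 1 be real numbers, let l ∈ ℕ, and let f : ℕ → ℝ be nonnegative with f(k+1) ≤ B · r^{2rk} · f(k)^r for all k ≥ l. Then for every k ≥ l one has f(k+1)^{r^{−(k+1)}} ≤ B^{∑_{j=l+1}^{k+1} r^{−j}} · r^{2∑_{j=l+1}^{k+1} (j−1) r^{−(j−1)}} · f(l)^{r^{−l}}. -/
/-!
Raising `f (k + 1) ≤ c k * f k ^ r` to the power `r ^ (-(k + 1))` makes the recursion linear: the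
sequence `g k = f k ^ r ^ (-k)` satisfies `g (k + 1) ≤ c k ^ r ^ (-(k + 1)) * g k`, so the discrete
Grönwall inequality bounds `g` by a product of powers of the `c k`. When `c k = B * b ^ (r * t k)`,
the `k`-th factor is `B ^ r ^ (-(k + 1)) * b ^ (t k * r ^ (-k))`, and the exponents add up.
-/

open Finset

section PowerRecursion

variable {r B b : ℝ} {l : ℕ} {f : ℕ → ℝ}

theorem mul_rpow_neg_add_one (hr : 0 < r) (x : ℝ) : r * r ^ (-(x + 1)) = r ^ (-x) := by
  rw [neg_add', Real.rpow_sub_one hr.ne', mul_div_cancel₀ _ hr.ne']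

theorem rpow_le_rpow_mul_rpow_mul {c x y s : ℝ} (hc : 0 ≤ c) (hx : 0 ≤ x) (hy : 0 ≤ y)
    (hs : 0 ≤ s) (h : y ≤ c * x ^ r) : y ^ s ≤ c ^ s * x ^ (r * s) :=
  calc y ^ s ≤ (c * x ^ r) ^ s := Real.rpow_le_rpow hy h hs
    _ = c ^ s * x ^ (r * s) := by
      rw [Real.mul_rpow hc (Real.rpow_nonneg hx r), ← Real.rpow_mul hx]

theorem rpow_rpow_neg_le_prod_mul {c : ℕ → ℝ} (hr : 0 < r) (hc : ∀ k, l ≤ k → 0 ≤ c k)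
    (hf : ∀ k, l ≤ k → 0 ≤ f k) (hrec : ∀ k, l ≤ k → f (k + 1) ≤ c k * f k ^ r)
    {n : ℕ} (hn : l ≤ n) :
    f n ^ r ^ (-(n : ℝ)) ≤
      (∏ k ∈ Ico l n, c k ^ r ^ (-((k : ℝ) + 1))) * f l ^ r ^ (-(l : ℝ)) := by
  have linear_rec : ∀ k ≥ l, f (k + 1) ^ r ^ (-((k + 1 : ℕ) : ℝ)) ≤
      c k ^ r ^ (-((k : ℝ) + 1)) * f k ^ r ^ (-(k : ℝ)) + 0 := fun k hk ↦ by
    rw [add_zero, Nat.cast_add_one, ← mul_rpow_neg_add_one hr k]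
    exact rpow_le_rpow_mul_rpow_mul (hc k hk) (hf k hk) (hf (k + 1) (by lia))
      (Real.rpow_nonneg hr.le _) (hrec k hk)
  have gronwall := discrete_gronwall_prod_general (u := fun k ↦ f k ^ r ^ (-(k : ℝ)))
    (b := fun _ ↦ 0) linear_rec (fun k hk ↦ Real.rpow_nonneg (hc k hk) _) hn
  simpa only [zero_mul, sum_const_zero, add_zero, mul_comm] using gronwall

theorem mul_rpow_rpow_neg_add_one (hr : 0 < r) (hB : 0 ≤ B) (hb : 0 ≤ b) (t x : ℝ) :
    (B * b ^ (r * t)) ^ r ^ (-(x + 1)) = B ^ r ^ (-(x + 1)) * b ^ (t * r ^ (-x)) := by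
  rw [Real.mul_rpow hB (Real.rpow_nonneg hb _), ← Real.rpow_mul hb, mul_comm r t, mul_assoc,
    mul_rpow_neg_add_one hr]

theorem rpow_rpow_neg_le_rpow_sum_mul (hr : 0 < r) (hB : 0 ≤ B) (hb : 0 < b) {t : ℕ → ℝ}
    (hf : ∀ k, l ≤ k → 0 ≤ f k)
    (hrec : ∀ k, l ≤ k → f (k + 1) ≤ B * b ^ (r * t k) * f k ^ r) {n : ℕ} (hn : l ≤ n) :
    f n ^ r ^ (-(n : ℝ)) ≤
      B ^ (∑ k ∈ Ico l n, r ^ (-((k : ℝ) + 1))) * b ^ (∑ k ∈ Ico l n, t k * r ^ (-(k : ℝ))) *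
        f l ^ r ^ (-(l : ℝ)) := by
  have coeff_nonneg (k : ℕ) (_ : l ≤ k) : 0 ≤ B * b ^ (r * t k) :=
    mul_nonneg hB (Real.rpow_nonneg hb.le _)
  refine (rpow_rpow_neg_le_prod_mul hr coeff_nonneg hf hrec hn).trans_eq ?_
  simp only [mul_rpow_rpow_neg_add_one hr hB hb.le]
  rw [prod_mul_distrib, Real.rpow_sum_of_nonneg hB fun _ _ ↦ Real.rpow_nonneg hr.le _,
    Real.rpow_sum_of_pos hb]

end PowerRecursion

theorem sum_Icc_add_one_add_one {M : Type*} [AddCommMonoid M] (g : ℕ → M) (m n : ℕ) :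
    ∑ j ∈ Icc (m + 1) (n + 1), g j = ∑ k ∈ Ico m (n + 1), g (k + 1) := by
  rw [sum_Ico_add', Ico_add_one_right_eq_Icc]

theorem stmt18_general {r B : ℝ} (hr : 0 < r) (hB : 0 ≤ B) {l : ℕ} {f : ℕ → ℝ}
    (hf : ∀ k, l ≤ k → 0 ≤ f k)
    (hrec : ∀ k : ℕ, l ≤ k → f (k + 1) ≤ B * r ^ (2 * r * (k : ℝ)) * f k ^ r)
    {k : ℕ} (hk : l ≤ k) :
    f (k + 1) ^ (r ^ (-((k : ℝ) + 1))) ≤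
      B ^ (∑ j ∈ Icc (l + 1) (k + 1), r ^ (-(j : ℝ))) *
        r ^ (2 * ∑ j ∈ Icc (l + 1) (k + 1), ((j : ℝ) - 1) * r ^ (-((j : ℝ) - 1))) *
        f l ^ (r ^ (-(l : ℝ))) := by
  have hrec' (i : ℕ) (hi : l ≤ i) : f (i + 1) ≤ B * r ^ (r * (2 * (i : ℝ))) * f i ^ r := by
    simpa only [mul_left_comm r 2, ← mul_assoc] using hrec i hi
  have bound := rpow_rpow_neg_le_rpow_sum_mul hr hB hr hf hrec' (hk.trans k.le_succ)
  simpa only [sum_Icc_add_one_add_one, Nat.cast_add_one, add_sub_cancel_right, mul_sum,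
    mul_assoc] using bound

theorem stmt18 (r B : ℝ) (hr : 1 < r) (hB : 1 ≤ B) (l : ℕ) (f : ℕ → ℝ)
    (hf : ∀ k, 0 ≤ f k)
    (hrec : ∀ k : ℕ, l ≤ k → f (k + 1) ≤ B * r ^ (2 * r * (k : ℝ)) * f k ^ r) :
    ∀ k : ℕ, l ≤ k →
      f (k + 1) ^ (r ^ (-((k : ℝ) + 1))) ≤
        B ^ (∑ j ∈ Finset.Icc (l + 1) (k + 1), r ^ (-(j : ℝ))) *
          r ^ (2 * ∑ j ∈ Finset.Icc (l + 1) (k + 1), ((j : ℝ) - 1) * r ^ (-((j : ℝ) - 1))) *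
          f l ^ (r ^ (-(l : ℝ))) :=
  fun _ hk ↦ stmt18_general (zero_lt_one.trans hr) (zero_le_one.trans hB) (fun k _ ↦ hf k) hrec hk
end
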